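/- arXiv:2409.02852 — 4 statements merged into one kernel-verified Lean document; each statement's English description precedes it below -/
import Mathlib

section
/- There exists a constant C > 0 such that for all integers n and s with 2 ≤ n ≤ s, the entropy H_{B|S} of the discretized Beta(1, n) distribution satisfies |H_{B|S} − (ln s − ln n + (n − 1)/n)| ≤ C · n · (ln n) / s. -/
/-- The entropy (in nats) of the discretization of the `Beta(1, n)` distribution onto the
uniform partition of `[0,1]` into `s` pieces: the `i`-th cell has probability
`(1 - i/s)^n - (1 - (i+1)/s)^n`. -/
noncomputable def discretizedBetaEntropy (n s : ℕ) : ℝ :=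
  -∑ i ∈ Finset.range s,
      ((1 - (i : ℝ) / s) ^ n - (1 - ((i : ℝ) + 1) / s) ^ n) *
        Real.log ((1 - (i : ℝ) / s) ^ n - (1 - ((i : ℝ) + 1) / s) ^ n)

/-!
After the reflection `y = 1 - x` the distribution has density `f y = n y ^ (n - 1)` and
distribution function `F y = y ^ n`. Let `G` be the primitive of `f log f` with `G 0 = 0`. On a
cell `[a, b]` of length `1 / s` and mass `q = F b - F a`, the quantity `q log (s q)` replaces
`∫ f log f = G b - G a`, and summing over the cells shows that the entropy differs from
`log s - G 1` by the total replacement error.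

By the mean value theorems of Lagrange and Cauchy, both `s q` and the exponential of
`(G b - G a) / q` are values of `f` on the cell, so the error of a cell is at most
`q (log f b - log f a) ≤ q (n - 1) (b - a) / a`. Away from the first cell `a ≥ b / 2`, and
Bernoulli's inequality gives `(n - 1) q / b ≤ n (b ^ (n - 1) - a ^ (n - 1))`. The first cell, on
which `log f` is unbounded, satisfies the resulting bound by direct computation. These bounds
telescope to `2 n / s`.
-/

open Real Set

/-- The error made on `[a, b]` when the increment of `G` is replaced by the value it would have if
the mass `F b - F a` were spread uniformly. It is meant for `F` a primitive of a density `f` and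
`G` a primitive of `f log f`; working with primitives avoids integrals. -/
noncomputable def cellEntropyDefect (F G : ℝ → ℝ) (a b : ℝ) : ℝ :=
  G b - G a - (F b - F a) * log ((F b - F a) / (b - a))

theorem abs_cellEntropyDefect_le {F G f : ℝ → ℝ} {a b lo hi : ℝ} (hab : a < b)
    (hFc : ContinuousOn F (Icc a b)) (hGc : ContinuousOn G (Icc a b))
    (hF : ∀ x ∈ Ioo a b, HasDerivAt F (f x) x)
    (hG : ∀ x ∈ Ioo a b, HasDerivAt G (f x * log (f x)) x)
    (hlo : 0 < lo) (hf : ∀ x ∈ Ioo a b, f x ∈ Icc lo hi) :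
    |cellEntropyDefect F G a b| ≤ (F b - F a) * (log hi - log lo) := by
  have log_mem : ∀ x ∈ Ioo a b, log (f x) ∈ Icc (log lo) (log hi) := fun x hx ↦
    have hx_pos : 0 < f x := hlo.trans_le (hf x hx).1
    ⟨log_le_log hlo (hf x hx).1, log_le_log hx_pos (hf x hx).2⟩
  obtain ⟨c, hc, G_slope⟩ := exists_ratio_hasDerivAt_eq_ratio_slope F f hab hFc hF G _ hGc hG
  obtain ⟨d, hd, F_slope⟩ := exists_hasDerivAt_eq_slope F f hab hFc hF
  have hfc : f c ≠ 0 := (hlo.trans_le (hf c hc).1).ne'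
  have G_increment : G b - G a = (F b - F a) * log (f c) :=
    mul_right_cancel₀ hfc (by rw [G_slope]; ring)
  have F_increment_nonneg : 0 ≤ F b - F a := by
    have slope_pos : 0 < (F b - F a) / (b - a) := F_slope ▸ hlo.trans_le (hf d hd).1
    exact ((div_pos_iff_of_pos_right (sub_pos.2 hab)).1 slope_pos).le
  calc |cellEntropyDefect F G a b|
      = (F b - F a) * |log (f c) - log (f d)| := by
        rw [cellEntropyDefect, G_increment, ← F_slope, ← mul_sub, abs_mul,
          abs_of_nonneg F_increment_nonneg]
    _ ≤ (F b - F a) * (log hi - log lo) := by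
        gcongr
        exact abs_sub_le_of_le_of_le (log_mem c hc).1 (log_mem c hc).2
          (log_mem d hd).1 (log_mem d hd).2

theorem sum_range_sub_apply_div {M : Type*} [AddCommGroup M] {K : Type*} [DivisionRing K]
    [CharZero K] (g : K → M) {s : ℕ} (hs : s ≠ 0) :
    ∑ k ∈ Finset.range s, (g ((k + 1) / s) - g (k / s)) = g 1 - g 0 := by
  simpa [hs] using Finset.sum_range_sub (fun k : ℕ ↦ g (k / s)) s

theorem sum_negMulLog_eq_add_sum_cellEntropyDefect (F G : ℝ → ℝ) {s : ℕ} (hs : s ≠ 0) :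
    ∑ k ∈ Finset.range s, negMulLog (F ((k + 1) / s) - F (k / s)) =
      (F 1 - F 0) * log s - (G 1 - G 0) +
        ∑ k ∈ Finset.range s, cellEntropyDefect F G (k / s) ((k + 1) / s) := by
  have hs' : (s : ℝ) ≠ 0 := Nat.cast_ne_zero.2 hs
  have cell (k : ℕ) : negMulLog (F ((k + 1) / s) - F (k / s)) =
      (F ((k + 1) / s) - F (k / s)) * log s - (G ((k + 1) / s) - G (k / s)) +
        cellEntropyDefect F G (k / s) ((k + 1) / s) := by
    have width : ((k : ℝ) + 1) / s - k / s = (s : ℝ)⁻¹ := by ring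
    rw [cellEntropyDefect, width, div_inv_eq_mul]
    generalize F ((k + 1) / s) - F (k / s) = q
    rcases eq_or_ne q 0 with rfl | hq
    · simp
    · rw [log_mul hq hs', negMulLog]
      ring
  rw [Finset.sum_congr rfl fun k _ ↦ cell k, Finset.sum_add_distrib, Finset.sum_sub_distrib,
    ← Finset.sum_mul, sum_range_sub_apply_div F hs, sum_range_sub_apply_div G hs]

/-- The primitive vanishing at `0` of `f log f`, where `f y = (m + 1) y ^ m` is the density whose
distribution function on `[0, 1]` is `y ^ (m + 1)`. -/
noncomputable def powEntropyPrimitive (m : ℕ) (y : ℝ) : ℝ :=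
  y ^ (m + 1) * (log (m + 1) + m * log y - m / (m + 1))

theorem log_succ_mul_pow (m : ℕ) {y : ℝ} (hy : y ≠ 0) :
    log ((m + 1) * y ^ m) = log (m + 1) + m * log y := by
  rw [log_mul (by positivity) (pow_ne_zero m hy), log_pow]

theorem hasDerivAt_powEntropyPrimitive (m : ℕ) {y : ℝ} (hy : y ≠ 0) :
    HasDerivAt (powEntropyPrimitive m) ((m + 1) * y ^ m * log ((m + 1) * y ^ m)) y := by
  have h := (hasDerivAt_pow (m + 1) y).mul
    ((((hasDerivAt_log hy).const_mul (m : ℝ)).const_add (log (m + 1))).sub_const (m / (m + 1) : ℝ))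
  refine h.congr_deriv ?_
  rw [log_succ_mul_pow m hy]
  rw [add_tsub_cancel_right]
  push_cast
  field_simp
  ring

theorem abs_cellEntropyDefect_pow_le (m : ℕ) {a b : ℝ} (ha : 0 < a) (hab : a < b) :
    |cellEntropyDefect (· ^ (m + 1)) (powEntropyPrimitive m) a b| ≤
      (b ^ (m + 1) - a ^ (m + 1)) * (m * (b / a - 1)) := by
  have hb : 0 < b := ha.trans hab
  have mass_nonneg : 0 ≤ b ^ (m + 1) - a ^ (m + 1) := sub_nonneg.2 (by gcongr)
  have defect_le := abs_cellEntropyDefect_le (F := (· ^ (m + 1))) (G := powEntropyPrimitive m)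
    (f := fun y ↦ (m + 1) * y ^ m) (lo := (m + 1) * a ^ m) (hi := (m + 1) * b ^ m) hab
    (by fun_prop)
    (fun x hx ↦ (hasDerivAt_powEntropyPrimitive m
      (ha.trans_le hx.1).ne').continuousAt.continuousWithinAt)
    (fun x _ ↦ by simpa using hasDerivAt_pow (m + 1) x)
    (fun x hx ↦ hasDerivAt_powEntropyPrimitive m (ha.trans hx.1).ne')
    (by positivity)
    (fun x ⟨hax, hxb⟩ ↦ ⟨by gcongr, by have := ha.trans hax; gcongr⟩)
  calc _ ≤ (b ^ (m + 1) - a ^ (m + 1)) * (log ((m + 1) * b ^ m) - log ((m + 1) * a ^ m)) :=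
        defect_le
    _ = (b ^ (m + 1) - a ^ (m + 1)) * (m * log (b / a)) := by
        rw [log_succ_mul_pow m hb.ne', log_succ_mul_pow m ha.ne', log_div hb.ne' ha.ne']
        ring
    _ ≤ (b ^ (m + 1) - a ^ (m + 1)) * (m * (b / a - 1)) := by
        gcongr
        exact log_le_sub_one_of_pos (div_pos hb ha)

theorem mul_pow_succ_sub_pow_succ_le {R : Type*} [CommRing R] [LinearOrder R] [IsOrderedRing R]
    (m : ℕ) {a b : R} (ha : 0 ≤ a) (hb : 0 ≤ b) :
    m * (b ^ (m + 1) - a ^ (m + 1)) ≤ (m + 1) * (b * (b ^ m - a ^ m)) := by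
  have bernoulli := pow_add_mul_le_add_pow (a := a) (b := b - a) ha
    (by simpa [two_mul, add_assoc] using add_nonneg ha hb) (m + 1)
  rw [add_sub_cancel, add_tsub_cancel_right] at bernoulli
  push_cast at bernoulli
  linear_combination bernoulli

theorem abs_cellEntropyDefect_pow_le_of_le_two_mul (m : ℕ) {a b : ℝ} (ha : 0 < a) (hab : a < b)
    (hba : b ≤ 2 * a) :
    |cellEntropyDefect (· ^ (m + 1)) (powEntropyPrimitive m) a b| ≤
      2 * (m + 1) * (b - a) * (b ^ m - a ^ m) := by
  have hb : 0 < b := ha.trans hab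
  have mass_nonneg : 0 ≤ b ^ (m + 1) - a ^ (m + 1) := sub_nonneg.2 (by gcongr)
  have relative_width_le : b / a - 1 ≤ 2 * (b - a) / b := by
    rw [div_sub_one ha.ne', div_le_div_iff₀ ha hb]
    nlinarith
  calc _ ≤ (b ^ (m + 1) - a ^ (m + 1)) * (m * (b / a - 1)) :=
        abs_cellEntropyDefect_pow_le m ha hab
    _ ≤ (b ^ (m + 1) - a ^ (m + 1)) * (m * (2 * (b - a) / b)) := by gcongr
    _ = 2 * (b - a) / b * (m * (b ^ (m + 1) - a ^ (m + 1))) := by ring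
    _ ≤ 2 * (b - a) / b * ((m + 1) * (b * (b ^ m - a ^ m))) :=
        mul_le_mul_of_nonneg_left (mul_pow_succ_sub_pow_succ_le m ha.le hb.le)
          (div_nonneg (by linarith) hb.le)
    _ = 2 * (m + 1) * (b - a) * (b ^ m - a ^ m) := by field_simp

theorem cellEntropyDefect_pow_zero_left (m : ℕ) {b : ℝ} (hb : b ≠ 0) :
    cellEntropyDefect (· ^ (m + 1)) (powEntropyPrimitive m) 0 b =
      b ^ (m + 1) * (log (m + 1) - m / (m + 1)) := by
  have mean_density : b ^ (m + 1) / b = b ^ m := by rw [pow_succ, mul_div_cancel_right₀ _ hb]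
  simp only [cellEntropyDefect, powEntropyPrimitive, ne_eq, Nat.succ_ne_zero, not_false_eq_true,
    zero_pow, zero_mul, sub_zero, mean_density, log_pow]
  ring

theorem abs_cellEntropyDefect_pow_zero_left_le (m : ℕ) {b : ℝ} (hb : 0 < b) :
    |cellEntropyDefect (· ^ (m + 1)) (powEntropyPrimitive m) 0 b| ≤ m * b ^ (m + 1) := by
  have hm : (0 : ℝ) < m + 1 := by positivity
  have log_ge : (m : ℝ) / (m + 1) ≤ log (m + 1) := by
    convert one_sub_inv_le_log_of_pos hm using 1
    field_simp
    ring
  have log_le : log (m + 1) - m / (m + 1) ≤ (m : ℝ) := by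
    have : (0 : ℝ) ≤ m / (m + 1) := by positivity
    linarith [log_le_sub_one_of_pos hm]
  rw [cellEntropyDefect_pow_zero_left m hb.ne',
    abs_of_nonneg (mul_nonneg (by positivity) (sub_nonneg.2 log_ge)), mul_comm (m : ℝ)]
  gcongr

theorem abs_cellEntropyDefect_pow_grid_le (m k : ℕ) {s : ℕ} (hs : s ≠ 0) :
    |cellEntropyDefect (· ^ (m + 1)) (powEntropyPrimitive m) (k / s) ((k + 1) / s)| ≤
      2 * (m + 1) / s * (((k + 1) / s : ℝ) ^ m - (k / s : ℝ) ^ m) := by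
  have hs' : (0 : ℝ) < s := by positivity
  rcases k.eq_zero_or_pos with rfl | hk
  · have first_cell := abs_cellEntropyDefect_pow_zero_left_le m (one_div_pos.2 hs')
    simp only [Nat.cast_zero, zero_div, zero_add]
    rcases m.eq_zero_or_pos with rfl | hm
    · simpa using first_cell
    · calc _ ≤ (m : ℝ) * (1 / s) ^ (m + 1) := first_cell
        _ ≤ 2 * (m + 1) * (1 / s) ^ (m + 1) := by gcongr; linarith
        _ = 2 * (m + 1) / s * ((1 / s) ^ m - 0 ^ m) := by
            rw [zero_pow hm.ne']
            ring
  · have hk' : (1 : ℝ) ≤ k := mod_cast hk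
    have le_two_mul : ((k : ℝ) + 1) / s ≤ 2 * (k / s) := by
      rw [← mul_div_assoc]
      gcongr
      linarith
    convert abs_cellEntropyDefect_pow_le_of_le_two_mul m (by positivity)
      (by gcongr; linarith) le_two_mul using 2
    ring

theorem discretizedBetaEntropy_eq_sum_negMulLog (n s : ℕ) :
    discretizedBetaEntropy n s =
      ∑ k ∈ Finset.range s, negMulLog (((k + 1) / s : ℝ) ^ n - (k / s : ℝ) ^ n) := by
  rw [discretizedBetaEntropy, ← Finset.sum_range_reflect, ← Finset.sum_neg_distrib]
  refine Finset.sum_congr rfl fun k hk ↦ ?_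
  have hks : k + 1 ≤ s := Finset.mem_range.1 hk
  have hs : (s : ℝ) ≠ 0 := Nat.cast_ne_zero.2 (by lia)
  have reflected_index : ((s - 1 - k : ℕ) : ℝ) = s - (k + 1) := by
    rw [Nat.sub_sub, add_comm, Nat.cast_sub hks, Nat.cast_add_one]
  have upper_end : 1 - ((s - 1 - k : ℕ) : ℝ) / s = (k + 1) / s := by
    rw [reflected_index, sub_div, div_self hs, sub_sub_cancel]
  have lower_end : 1 - (((s - 1 - k : ℕ) : ℝ) + 1) / s = k / s := by
    rw [add_div, ← sub_sub, upper_end]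
    ring
  rw [upper_end, lower_end, negMulLog, neg_mul]

theorem discretizedBetaEntropy_approx_general {n s : ℕ} (hn : n ≠ 0) (hs : s ≠ 0) :
    |discretizedBetaEntropy n s - (log s - log n + ((n : ℝ) - 1) / n)| ≤ 2 * n / s := by
  obtain ⟨m, rfl⟩ := Nat.exists_eq_succ_of_ne_zero hn
  have error_eq : discretizedBetaEntropy (m + 1) s -
      (log s - log (m + 1) + ((m : ℝ) + 1 - 1) / (m + 1)) = ∑ k ∈ Finset.range s,
        cellEntropyDefect (· ^ (m + 1)) (powEntropyPrimitive m) (k / s) ((k + 1) / s) := by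
    rw [discretizedBetaEntropy_eq_sum_negMulLog,
      sum_negMulLog_eq_add_sum_cellEntropyDefect (· ^ (m + 1)) (powEntropyPrimitive m) hs]
    simp only [powEntropyPrimitive, one_pow, log_one, ne_eq, Nat.succ_ne_zero, not_false_eq_true,
      zero_pow]
    ring
  rw [Nat.succ_eq_add_one, Nat.cast_add_one, error_eq]
  calc _ ≤ ∑ k ∈ Finset.range s, 2 * (m + 1) / s * (((k + 1) / s : ℝ) ^ m - (k / s : ℝ) ^ m) :=
        (Finset.abs_sum_le_sum_abs _ _).trans
          (Finset.sum_le_sum fun k _ ↦ abs_cellEntropyDefect_pow_grid_le m k hs)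
    _ = 2 * (m + 1) / s * (1 ^ m - 0 ^ m) := by
        rw [← Finset.mul_sum, sum_range_sub_apply_div (· ^ m) hs]
    _ ≤ 2 * (m + 1) / s := by
        refine mul_le_of_le_one_right (by positivity) ?_
        rw [one_pow]
        exact sub_le_self 1 (by positivity)

theorem discretizedBetaEntropy_approx :
    ∃ C > (0 : ℝ), ∀ n s : ℕ, 2 ≤ n → n ≤ s →
      |discretizedBetaEntropy n s -
          (Real.log s - Real.log n + ((n : ℝ) - 1) / n)| ≤
        C * n * Real.log n / s := by
  refine ⟨2 / log 2, div_pos two_pos (log_pos one_lt_two), fun n s hn hns ↦ ?_⟩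
  have log_two_le : log 2 ≤ log n := log_le_log two_pos (mod_cast hn)
  calc _ ≤ (2 * n / s : ℝ) := discretizedBetaEntropy_approx_general (by lia) (by lia)
    _ = 2 / log 2 * n * log 2 / s := by field_simp
    _ ≤ 2 / log 2 * n * log n / s := by gcongr
end

section
/- There exists a constant C > 0 such that for all integers k, n, s with 2 ≤ k < n ≤ s, the entropy H_{K|N} of the distribution of the set of k least elements of a uniformly random n-element subset of {1, ..., s} satisfies |H_{K|N} − k·(ln s − ln(n + 1) + 1)| ≤ C · ( k·n·(ln n)/s + ln k ). -/
/-- `pj k n s j` is the probability that the `k`-th smallest element of a uniformly random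
`n`-element subset of `{1, ..., s}` equals `j`. -/
noncomputable def pj (k n s j : ℕ) : ℝ :=
  ((j - 1).choose (k - 1) * (s - j).choose (n - k) : ℝ) / (s.choose n : ℝ)

/-- `pk k j` is the conditional probability of each particular `k`-element subset whose maximum
is `j`, given that the `k`-th smallest element of the random `n`-element subset is `j`. -/
noncomputable def pkGiven (k j : ℕ) : ℝ :=
  1 / ((j - 1).choose (k - 1) : ℝ)

/-- The entropy (in nats) of the distribution of the set of `k` least elements of a uniformly
random `n`-element subset of `{1, ..., s}`. -/
noncomputable def leastKEntropy (k n s : ℕ) : ℝ :=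
  -∑ j ∈ Finset.Icc k s, pj k n s j * Real.log (pj k n s j * pkGiven k j)

/-!
Let `J` be the `k`-th smallest element. Each `k`-set with maximum `j` arises with probability
`C(s - j, n - k) / C(s, n)`, so the entropy is the mean of `log (C(s, n) / C(s - J, n - k))`. Two
applications of Jensen's inequality for `log` sandwich it: for `1 ≤ k < n ≤ s`,
`k (log (s - n + 1) - log (n + 1) + 1) - log (k + 1) ≤ H ≤ k (log (s + 2) - log (n + 1) + 1)`.
Both use only `E J = k (s + 1) / (n + 1)`. For the upper bound, compare with the law of the first
`k` successes of Bernoulli trials of parameter `(n + 1) / (s + 2)`. For the lower bound, bound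
`C(s - j, n - k) / C(s, n)` by a constant times `((s - j) / s) ^ (n - k)`.
-/

open Finset Real

theorem sum_mul_log_le_log_of_sum_mul_le {ι : Type*} {t : Finset ι} {w x : ι → ℝ} {μ : ℝ}
    (hw : ∀ i ∈ t, 0 ≤ w i) (hw_sum : ∑ i ∈ t, w i = 1) (hx : ∀ i ∈ t, w i ≠ 0 → 0 < x i)
    (hμ : ∑ i ∈ t, w i * x i ≤ μ) :
    ∑ i ∈ t, w i * log (x i) ≤ log μ := by
  have sum_support (f : ι → ℝ) : ∑ i ∈ t with w i ≠ 0, w i • f i = ∑ i ∈ t, w i * f i :=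
    sum_filter_of_ne fun _ _ => left_ne_zero_of_mul
  have hw' : ∀ i ∈ {i ∈ t | w i ≠ 0}, 0 ≤ w i := fun i hi => hw i (mem_filter.1 hi).1
  have hw_sum' : ∑ i ∈ t with w i ≠ 0, w i = 1 := by rwa [sum_filter_ne_zero]
  have hx' : ∀ i ∈ {i ∈ t | w i ≠ 0}, x i ∈ Set.Ioi 0 := fun i hi =>
    hx i (mem_filter.1 hi).1 (mem_filter.1 hi).2
  have mean_pos := (convex_Ioi (0 : ℝ)).sum_mem hw' hw_sum' hx'
  have jensen := strictConcaveOn_log_Ioi.concaveOn.le_map_sum hw' hw_sum' hx'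
  simp only [sum_support] at mean_pos jensen
  exact jensen.trans (log_le_log mean_pos hμ)

theorem log_le_two_mul_log {x y : ℝ} (hx : 0 < x) (hxy : x ≤ y ^ 2) : log x ≤ 2 * log y := by
  simpa only [log_pow, Nat.cast_ofNat] using log_le_log hx hxy

theorem log_sub_log_le_div {x y : ℝ} (hx : 0 < x) (hy : 0 < y) :
    log y - log x ≤ (y - x) / x := by
  rw [← log_div hy.ne' hx.ne', sub_div, div_self hx.ne']
  exact log_le_sub_one_of_pos (div_pos hy hx)

theorem sub_one_le_mul_log {x : ℝ} (hx : 0 < x) : x - 1 ≤ x * log x := by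
  have h := mul_le_mul_of_nonneg_left (one_sub_inv_le_log_of_pos hx) hx.le
  rwa [mul_sub, mul_one, mul_inv_cancel₀ hx.ne'] at h

theorem log_sub_log_sub_add_one_le {n s : ℕ} (hn : 1 ≤ n) (hns : n ≤ s) :
    log s - log (s - n + 1) ≤ 4 * (n * log n / s) := by
  have hn' : (1 : ℝ) ≤ n := mod_cast hn
  have hns' : (n : ℝ) ≤ s := mod_cast hns
  have hs : (0 : ℝ) < s := by linarith
  have hsn : (0 : ℝ) < s - n + 1 := by linarith
  have hlog : 0 ≤ log n := log_natCast_nonneg n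
  rcases le_or_gt (2 * n) s with hfar | hnear
  · have hfar' : (2 * n : ℝ) ≤ s := mod_cast hfar
    calc log s - log (s - n + 1) ≤ (s - (s - n + 1)) / (s - n + 1) := log_sub_log_le_div hsn hs
      _ ≤ 2 * (n - 1) / s := by
          rw [div_le_div_iff₀ hsn hs]
          nlinarith
      _ ≤ 4 * (n * log n) / s := by
          refine div_le_div_of_nonneg_right ?_ hs.le
          linarith [sub_one_le_mul_log (x := n) (by linarith)]
      _ = 4 * (n * log n / s) := by ring
  · have hnear' : (s + 1 : ℝ) ≤ 2 * n := mod_cast hnear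
    have log_s_le : log s ≤ 2 * log n := log_le_two_mul_log hs (by nlinarith)
    have hratio : 2 * log n ≤ 4 * (n * log n / s) := by
      rw [← mul_div_assoc, le_div_iff₀ hs]
      nlinarith
    linarith [log_nonneg (by linarith : (1 : ℝ) ≤ s - n + 1)]

theorem log_add_two_sub_log_le {x y : ℝ} (hx : 0 < x) (hy : 2 ≤ y) :
    log (x + 2) - log x ≤ 2 * (y * log y / x) :=
  calc log (x + 2) - log x ≤ (x + 2 - x) / x := log_sub_log_le_div hx (by positivity)
    _ = 2 * (1 / x) := by ring
    _ ≤ 2 * (y * log y / x) := by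
        gcongr
        linarith [sub_one_le_mul_log (x := y) (by linarith)]

theorem sum_range_choose_mul_choose (a b s : ℕ) :
    ∑ j ∈ range (s + 1), j.choose a * (s - j).choose b = (s + 1).choose (a + b + 1) := by
  induction s generalizing b with
  | zero => cases a <;> cases b <;> simp [Nat.choose_eq_zero_of_lt]
  | succ s ih =>
    rw [sum_range_succ]
    cases b with
    | zero =>
      have hockey_stick := ih 0
      simp only [Nat.choose_zero_right, mul_one, add_zero] at hockey_stick ⊢
      rw [hockey_stick, Nat.choose_succ_succ (s + 1) a, add_comm]
    | succ b =>
      have pascal : ∀ j ∈ range (s + 1), j.choose a * (s + 1 - j).choose (b + 1) =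
          j.choose a * (s - j).choose b + j.choose a * (s - j).choose (b + 1) := by
        intro j hj
        rw [Nat.succ_sub (mem_range_succ_iff.1 hj), Nat.choose_succ_succ, mul_add]
      rw [sum_congr rfl pascal, sum_add_distrib, ih b, ih (b + 1), Nat.sub_self,
        Nat.choose_zero_succ, mul_zero, add_zero, ← add_assoc a b 1, Nat.choose_succ_succ (s + 1)]

theorem sum_Icc_choose_mul_choose (a b s : ℕ) :
    ∑ j ∈ Icc a s, j.choose a * (s - j).choose b = (s + 1).choose (a + b + 1) := by
  rw [← sum_range_choose_mul_choose]
  refine sum_subset (fun j hj => mem_range_succ_iff.2 (mem_Icc.1 hj).2) fun j hj hj' => ?_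
  have hja : j < a := by
    rw [mem_range_succ_iff] at hj
    rw [mem_Icc] at hj'
    omega
  rw [Nat.choose_eq_zero_of_lt hja, zero_mul]

theorem choose_mul_pow_le_choose_mul_pow {a b : ℕ} (hab : a ≤ b) (m : ℕ) :
    a.choose m * b ^ m ≤ b.choose m * a ^ m := by
  induction m with
  | zero => simp
  | succ m ih =>
    have factor : (a - m) * b ≤ (b - m) * a := by
      rw [Nat.sub_mul, Nat.sub_mul, mul_comm b a]
      exact Nat.sub_le_sub_left (Nat.mul_le_mul_left m hab) _
    refine Nat.le_of_mul_le_mul_right ?_ m.succ_pos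
    calc a.choose (m + 1) * b ^ (m + 1) * (m + 1)
        = a.choose (m + 1) * (m + 1) * b ^ (m + 1) := by ring
      _ = a.choose m * b ^ m * ((a - m) * b) := by rw [Nat.choose_succ_right_eq]; ring
      _ ≤ b.choose m * a ^ m * ((b - m) * a) := Nat.mul_le_mul ih factor
      _ = b.choose (m + 1) * (m + 1) * a ^ (m + 1) := by rw [Nat.choose_succ_right_eq]; ring
      _ = b.choose (m + 1) * a ^ (m + 1) * (m + 1) := by ring

theorem choose_mul_descFactorial {k n : ℕ} (hkn : k ≤ n) (s : ℕ) :
    s.choose n * n.descFactorial k =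
      s.choose (n - k) * (s - (n - k)).descFactorial k := by
  have h := Nat.choose_mul (n := s) (Nat.sub_le n k)
  rw [Nat.choose_symm hkn, Nat.sub_sub_self hkn] at h
  rw [Nat.descFactorial_eq_factorial_mul_choose, Nat.descFactorial_eq_factorial_mul_choose,
    Nat.mul_left_comm, h, Nat.mul_left_comm]

theorem choose_mul_pow_mul_pow_le {k n s a : ℕ} (hkn : k ≤ n) (hns : n ≤ s) (has : a ≤ s) :
    a.choose (n - k) * s ^ (n - k) * (s - n + 1) ^ k ≤
      s.choose n * n.descFactorial k * a ^ (n - k) :=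
  calc a.choose (n - k) * s ^ (n - k) * (s - n + 1) ^ k
      ≤ s.choose (n - k) * a ^ (n - k) * (s - (n - k)).descFactorial k := by
        refine Nat.mul_le_mul (choose_mul_pow_le_choose_mul_pow has _) ?_
        convert Nat.pow_sub_le_descFactorial (s - (n - k)) k using 2
        omega
    _ = s.choose n * n.descFactorial k * a ^ (n - k) := by
        rw [choose_mul_descFactorial hkn, mul_right_comm]

theorem log_ascFactorial_le {a : ℕ} (ha : 0 < a) (k : ℕ) :
    log (a.ascFactorial k) ≤ (a + k) * log (a + k) - a * log a - k := by
  induction k with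
  | zero => simp
  | succ k ih =>
    have hak : (0 : ℝ) < a + k := by positivity
    have hasc : 0 < a.ascFactorial k :=
      (pow_pos ha k).trans_le (Nat.pow_succ_le_ascFactorial a k)
    have increment : 1 ≤ (a + k + 1) * (log (a + k + 1) - log (a + k) : ℝ) := by
      have h := log_sub_log_le_div (x := (a + k + 1 : ℝ)) (by positivity) hak
      rw [le_div_iff₀ (by positivity)] at h
      linarith
    rw [Nat.ascFactorial_succ]
    push_cast
    rw [log_mul hak.ne' (Nat.cast_ne_zero.2 hasc.ne'), ← add_assoc]
    linarith

theorem log_descFactorial_le {k n : ℕ} (hkn : k ≤ n) :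
    log (n.descFactorial k) ≤
      (n + 1) * log (n + 1) - (n - k + 1) * log (n - k + 1) - k := by
  obtain ⟨m, rfl⟩ := Nat.exists_eq_add_of_le' hkn
  rw [Nat.add_descFactorial_eq_ascFactorial]
  convert log_ascFactorial_le m.succ_pos k using 4 <;> push_cast <;> ring_nf

theorem le_log_choose_div_choose {k n s a : ℕ} (hkn : k ≤ n) (hns : n ≤ s) (has : a ≤ s)
    (ha : 0 < a) (hnka : n - k ≤ a) :
    k * log (s - n + 1) - log (n.descFactorial k) - (n - k) * log (a / s) ≤
      log (s.choose n / a.choose (n - k)) := by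
  have hs : (0 : ℝ) < s := Nat.cast_pos.2 (ha.trans_le has)
  have ha' : (0 : ℝ) < a := Nat.cast_pos.2 ha
  have hsn : (0 : ℝ) < s - n + 1 := by
    rw [← Nat.cast_sub hns]
    positivity
  have hchoose_s : (0 : ℝ) < s.choose n := Nat.cast_pos.2 (Nat.choose_pos hns)
  have hchoose_a : (0 : ℝ) < a.choose (n - k) := Nat.cast_pos.2 (Nat.choose_pos hnka)
  have hdesc : (0 : ℝ) < n.descFactorial k := Nat.cast_pos.2 (Nat.descFactorial_pos.2 hkn)
  have hle : (a.choose (n - k) * s ^ (n - k) * (s - n + 1) ^ k : ℝ) ≤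
      s.choose n * n.descFactorial k * a ^ (n - k) := by
    rw [← Nat.cast_sub hns]
    exact_mod_cast choose_mul_pow_mul_pow_le hkn hns has
  have hlog := log_le_log (by positivity) hle
  rw [log_mul (by positivity) (by positivity), log_mul hchoose_a.ne' (by positivity),
    log_mul (by positivity) (by positivity), log_mul hchoose_s.ne' hdesc.ne',
    log_pow, log_pow, log_pow, Nat.cast_sub hkn] at hlog
  rw [log_div hchoose_s.ne' hchoose_a.ne', log_div ha'.ne' hs.ne']
  linarith

theorem sum_choose_mul_pow_mul_one_sub_pow_le_one {k : ℕ} (hk : 1 ≤ k) (s : ℕ) {p : ℝ}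
    (hp₀ : 0 < p) (hp₁ : p ≤ 1) :
    ∑ j ∈ Icc k s, ((j - 1).choose (k - 1) : ℝ) * (p ^ k * (1 - p) ^ (j - k)) ≤ 1 := by
  have hq : 0 ≤ 1 - p := sub_nonneg.2 hp₁
  have hasSum := hasSum_choose_mul_geometric_of_norm_lt_one (k - 1) (r := 1 - p)
    (by rw [norm_of_nonneg hq]; linarith)
  rw [Nat.sub_add_cancel hk, sub_sub_cancel] at hasSum
  have partial_sum_le := sum_le_hasSum (range (s + 1 - k)) (fun i _ => by positivity) hasSum
  calc ∑ j ∈ Icc k s, ((j - 1).choose (k - 1) : ℝ) * (p ^ k * (1 - p) ^ (j - k))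
      = p ^ k * ∑ i ∈ range (s + 1 - k), ((i + (k - 1)).choose (k - 1) : ℝ) * (1 - p) ^ i := by
        rw [← Ico_add_one_right_eq_Icc, sum_Ico_eq_sum_range, mul_sum]
        refine sum_congr rfl fun i _ => ?_
        rw [Nat.add_sub_cancel_left, add_comm k i, Nat.add_sub_assoc hk, mul_left_comm]
    _ ≤ p ^ k * (1 / p ^ k) := by gcongr
    _ = 1 := mul_one_div_cancel (by positivity)

theorem pj_nonneg (k n s j : ℕ) : 0 ≤ pj k n s j := by
  unfold pj
  positivity

theorem le_sub_of_pj_ne_zero {k n s j : ℕ} (h : pj k n s j ≠ 0) : n - k ≤ s - j := by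
  contrapose! h
  simp [pj, Nat.choose_eq_zero_of_lt h]

theorem leastKEntropy_eq_sum_mul_log_choose_div_choose (k n s : ℕ) :
    leastKEntropy k n s =
      ∑ j ∈ Icc k s, pj k n s j * log (s.choose n / (s - j).choose (n - k)) := by
  rw [leastKEntropy, ← sum_neg_distrib]
  refine sum_congr rfl fun j hj => ?_
  have hchoose : ((j - 1).choose (k - 1) : ℝ) ≠ 0 :=
    Nat.cast_ne_zero.2 (Nat.choose_pos (Nat.sub_le_sub_right (mem_Icc.1 hj).1 1)).ne'
  have prob_eq : pj k n s j * pkGiven k j = ((s - j).choose (n - k) : ℝ) / s.choose n := by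
    rw [pj, pkGiven]
    field_simp
  rw [prob_eq, ← inv_div, log_inv, mul_neg, neg_neg]

section

variable {k n s : ℕ}

theorem sum_pj (hk : 1 ≤ k) (hkn : k ≤ n) (hns : n ≤ s) : ∑ j ∈ Icc k s, pj k n s j = 1 := by
  have hchoose : (s.choose n : ℝ) ≠ 0 := Nat.cast_ne_zero.2 (Nat.choose_pos hns).ne'
  simp only [pj]
  rw [← sum_div, div_eq_one_iff_eq hchoose]
  obtain ⟨a, rfl⟩ := Nat.exists_eq_add_of_le' hk
  obtain ⟨t, rfl⟩ := Nat.exists_eq_add_of_le' (hk.trans (hkn.trans hns))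
  have shift := sum_Ico_add' (fun j => (j - 1).choose a * (t + 1 - j).choose (n - (a + 1)))
    a (t + 1) 1
  simp only [Nat.add_sub_cancel, Nat.add_sub_add_right, Ico_add_one_right_eq_Icc,
    sum_Icc_choose_mul_choose] at shift
  rw [show a + (n - (a + 1)) + 1 = n by omega] at shift
  exact_mod_cast shift.symm

theorem sum_pj_mul_id (hk : 1 ≤ k) (hkn : k ≤ n) (hns : n ≤ s) :
    ∑ j ∈ Icc k s, pj k n s j * j = k * (s + 1) / (n + 1) := by
  have hchoose : (s.choose n : ℝ) ≠ 0 := Nat.cast_ne_zero.2 (Nat.choose_pos hns).ne'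
  have absorb : ∀ j ∈ Icc k s, pj k n s j * j =
      k / s.choose n * (j.choose k * (s - j).choose (n - k) : ℕ) := by
    intro j hj
    have h : j * (j - 1).choose (k - 1) = j.choose k * k := by
      have h := Nat.add_one_mul_choose_eq (j - 1) (k - 1)
      rwa [Nat.sub_add_cancel hk, Nat.sub_add_cancel (hk.trans (mem_Icc.1 hj).1)] at h
    have h' : (j * (j - 1).choose (k - 1) : ℝ) = j.choose k * k := mod_cast h
    rw [pj]
    push_cast
    linear_combination ((s - j).choose (n - k) : ℝ) / s.choose n * h'
  have choose_absorb : (s + 1) * s.choose n = ((s + 1).choose (n + 1) * (n + 1) : ℝ) :=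
    mod_cast Nat.add_one_mul_choose_eq s n
  rw [sum_congr rfl absorb, ← mul_sum, ← Nat.cast_sum, sum_Icc_choose_mul_choose,
    Nat.add_sub_cancel' hkn]
  field_simp
  linear_combination -choose_absorb

-- Gibbs' inequality, for a sub-probability on `k`-sets that gives weight `q j` to each `k`-set with
-- maximum `j`.
theorem leastKEntropy_le_neg_sum_mul_log (hk : 1 ≤ k) (hkn : k ≤ n) (hns : n ≤ s) {q : ℕ → ℝ}
    (hq : ∀ j ∈ Icc k s, 0 < q j)
    (hq_sum : ∑ j ∈ Icc k s, ((j - 1).choose (k - 1) : ℝ) * q j ≤ 1) :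
    leastKEntropy k n s ≤ -∑ j ∈ Icc k s, pj k n s j * log (q j) := by
  let r : ℕ → ℝ := fun j => s.choose n / (s - j).choose (n - k)
  have hnum : (0 : ℝ) < s.choose n := Nat.cast_pos.2 (Nat.choose_pos hns)
  have hden (j : ℕ) (h0 : pj k n s j ≠ 0) : (0 : ℝ) < (s - j).choose (n - k) :=
    Nat.cast_pos.2 (Nat.choose_pos (le_sub_of_pj_ne_zero h0))
  have hr (j : ℕ) (h0 : pj k n s j ≠ 0) : 0 < r j := div_pos hnum (hden j h0)
  have log_split : ∑ j ∈ Icc k s, pj k n s j * log (q j * r j) =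
      ∑ j ∈ Icc k s, pj k n s j * log (q j) + leastKEntropy k n s := by
    rw [leastKEntropy_eq_sum_mul_log_choose_div_choose, ← sum_add_distrib]
    refine sum_congr rfl fun j hj => ?_
    rcases eq_or_ne (pj k n s j) 0 with h0 | h0
    · simp [h0]
    · rw [log_mul (hq j hj).ne' (hr j h0).ne', mul_add]
  have likelihood_ratio_le : ∑ j ∈ Icc k s, pj k n s j * (q j * r j) ≤ 1 := by
    refine (sum_le_sum fun j hj => ?_).trans hq_sum
    rcases eq_or_ne (pj k n s j) 0 with h0 | h0
    · rw [h0, zero_mul]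
      exact mul_nonneg (Nat.cast_nonneg _) (hq j hj).le
    · have := hden j h0
      simp only [pj, r]
      field_simp
      exact le_rfl
  have gibbs := sum_mul_log_le_log_of_sum_mul_le (fun j _ => pj_nonneg k n s j)
    (sum_pj hk hkn hns) (fun j hj h0 => mul_pos (hq j hj) (hr j h0)) likelihood_ratio_le
  rw [log_split, log_one] at gibbs
  linarith

theorem leastKEntropy_le_bernoulli_crossEntropy (hk : 1 ≤ k) (hkn : k ≤ n) (hns : n ≤ s) {p : ℝ}
    (hp₀ : 0 < p) (hp₁ : p < 1) :
    leastKEntropy k n s ≤ k * (-log p - (s - n) / (n + 1) * log (1 - p)) := by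
  have hq : 0 < 1 - p := sub_pos.2 hp₁
  have log_eq : ∀ j ∈ Icc k s, pj k n s j * log (p ^ k * (1 - p) ^ (j - k)) =
      pj k n s j * (k * log p - k * log (1 - p)) + pj k n s j * j * log (1 - p) := by
    intro j hj
    rw [log_mul (pow_pos hp₀ k).ne' (pow_pos hq (j - k)).ne', log_pow, log_pow,
      Nat.cast_sub (mem_Icc.1 hj).1]
    ring
  refine (leastKEntropy_le_neg_sum_mul_log hk hkn hns
    (fun j _ => mul_pos (pow_pos hp₀ k) (pow_pos hq (j - k)))
    (sum_choose_mul_pow_mul_one_sub_pow_le_one hk s hp₀ hp₁.le)).trans_eq ?_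
  rw [sum_congr rfl log_eq, sum_add_distrib, ← sum_mul, ← sum_mul, sum_pj hk hkn hns,
    sum_pj_mul_id hk hkn hns]
  field_simp
  ring

-- The mean of `J` suggests the parameter `(n + 1) / (s + 1)`, but that is `1` when `n = s`.
theorem leastKEntropy_le (hk : 1 ≤ k) (hkn : k ≤ n) (hns : n ≤ s) :
    leastKEntropy k n s ≤ k * (log (s + 2) - log (n + 1) + 1) := by
  have hns' : (0 : ℝ) ≤ s - n := sub_nonneg.2 (Nat.cast_le.2 hns)
  have hsn : (0 : ℝ) < s - n + 1 := by linarith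
  have one_sub_eq : 1 - (n + 1) / (s + 2) = ((s - n + 1) / (s + 2) : ℝ) := by
    field_simp
    ring
  have failure_term : (s - n) / (n + 1) * (log (s + 2) - log (s - n + 1)) ≤ (1 : ℝ) :=
    calc (s - n) / (n + 1) * (log (s + 2) - log (s - n + 1))
        ≤ (s - n) / (n + 1) * ((s + 2 - (s - n + 1)) / (s - n + 1) : ℝ) := by
          gcongr
          exact log_sub_log_le_div hsn (by positivity)
      _ = (s - n) / (s - n + 1) := by
          field_simp
          ring
      _ ≤ 1 := (div_le_one hsn).2 (by linarith)
  refine (leastKEntropy_le_bernoulli_crossEntropy hk hkn hns (p := (n + 1) / (s + 2))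
    (by positivity) ((div_lt_one (by positivity)).2 (by linarith))).trans ?_
  rw [one_sub_eq, log_div (by positivity) (by positivity), log_div hsn.ne' (by positivity)]
  gcongr
  linarith

theorem sum_pj_mul_log_sub_div_le (hk : 1 ≤ k) (hkn : k < n) (hns : n ≤ s) :
    ∑ j ∈ Icc k s, pj k n s j * log ((s - j : ℕ) / s) ≤ log (n - k + 1) - log (n + 1) := by
  have hs : (0 : ℝ) < s := Nat.cast_pos.2 (by omega)
  have hpos (j : ℕ) (h0 : pj k n s j ≠ 0) : (0 : ℝ) < (s - j : ℕ) / s := by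
    have := le_sub_of_pj_ne_zero h0
    exact div_pos (Nat.cast_pos.2 (by omega)) hs
  have hnk : (0 : ℝ) < n - k + 1 := by
    rw [← Nat.cast_sub hkn.le]
    positivity
  have linear : ∀ j ∈ Icc k s, pj k n s j * ((s - j : ℕ) / s) =
      pj k n s j - pj k n s j * j / s := by
    intro j hj
    rw [Nat.cast_sub (mem_Icc.1 hj).2]
    field_simp
  have mean_le : ∑ j ∈ Icc k s, pj k n s j * ((s - j : ℕ) / s : ℝ) ≤ (n - k + 1) / (n + 1) :=
    calc ∑ j ∈ Icc k s, pj k n s j * ((s - j : ℕ) / s : ℝ)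
        = 1 - k * (s + 1) / (n + 1) / s := by
          rw [sum_congr rfl linear, sum_sub_distrib, ← sum_div, sum_pj hk hkn.le hns,
            sum_pj_mul_id hk hkn.le hns]
      _ ≤ (n - k + 1) / (n + 1) := by
          field_simp
          linarith
  rw [← log_div hnk.ne' (by positivity)]
  exact sum_mul_log_le_log_of_sum_mul_le (fun j _ => pj_nonneg k n s j) (sum_pj hk hkn.le hns)
    (fun j _ => hpos j) mean_le

theorem le_leastKEntropy (hk : 1 ≤ k) (hkn : k < n) (hns : n ≤ s) :
    k * (log (s - n + 1) - log (n + 1) + 1) - log (k + 1) ≤ leastKEntropy k n s := by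
  have hkn' : (k + 1 : ℝ) ≤ n := mod_cast hkn
  have hnk : (0 : ℝ) < n - k + 1 := by linarith
  have pointwise : ∀ j ∈ Icc k s,
      pj k n s j * (k * log (s - n + 1) - log (n.descFactorial k)) -
        (n - k) * (pj k n s j * log ((s - j : ℕ) / s)) ≤
      pj k n s j * log (s.choose n / (s - j).choose (n - k)) := by
    intro j _
    rcases eq_or_ne (pj k n s j) 0 with h0 | h0
    · simp [h0]
    · have hnj := le_sub_of_pj_ne_zero h0
      have h := mul_le_mul_of_nonneg_left
        (le_log_choose_div_choose hkn.le hns (Nat.sub_le s j) (by omega) hnj) (pj_nonneg k n s j)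
      linarith
  have averaged := sum_le_sum pointwise
  rw [sum_sub_distrib, ← sum_mul, ← mul_sum, sum_pj hk hkn.le hns, one_mul,
    ← leastKEntropy_eq_sum_mul_log_choose_div_choose] at averaged
  have jensen := mul_le_mul_of_nonneg_left (sum_pj_mul_log_sub_div_le hk hkn hns)
    (by linarith : (0 : ℝ) ≤ n - k)
  have log_le : log (n + 1) ≤ log (n - k + 1) + log (k + 1) := by
    rw [← log_mul hnk.ne' (by positivity)]
    gcongr
    nlinarith
  linarith [log_descFactorial_le hkn.le]

end

theorem leastKEntropy_approx :
    ∃ C > (0 : ℝ), ∀ k n s : ℕ, 2 ≤ k → k < n → n ≤ s →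
      |leastKEntropy k n s - (k : ℝ) * (Real.log s - Real.log ((n : ℝ) + 1) + 1)| ≤
        C * ((k : ℝ) * n * Real.log n / s + Real.log k) := by
  refine ⟨4, by norm_num, fun k n s hk hkn hns => ?_⟩
  have hk' : (2 : ℝ) ≤ k := mod_cast hk
  have hn : (2 : ℝ) ≤ n := mod_cast hk.trans hkn.le
  have hs : (0 : ℝ) < s := Nat.cast_pos.2 (by omega)
  have upper := leastKEntropy_le (by omega) hkn.le hns
  have lower := le_leastKEntropy (by omega) hkn hns
  have upper_error := mul_le_mul_of_nonneg_left (log_add_two_sub_log_le hs hn) k.cast_nonneg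
  have lower_error := mul_le_mul_of_nonneg_left
    (log_sub_log_sub_add_one_le (by omega) hns) k.cast_nonneg
  have log_succ_le : log (k + 1) ≤ 2 * log k :=
    log_le_two_mul_log (by positivity) (by nlinarith)
  have log_k_nonneg : 0 ≤ log k := log_natCast_nonneg k
  have error_nonneg : 0 ≤ k * (n * log n / s) := by positivity
  rw [mul_assoc (k : ℝ) n, mul_div_assoc (k : ℝ), abs_le]
  exact ⟨by linarith, by linarith [error_nonneg]⟩
end

section
/- There exists a constant C > 0 such that for all integers k and n with 2 ≤ k < n, the differential entropy H of the Beta(k, n − k + 1) distribution satisfies |H + ln(n + 1)| ≤ C · ln k. -/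
/-- The density of the `Beta(α, β)` distribution on `[0, 1]`, for real parameters `α, β`. -/
noncomputable def betaDensity (α β : ℝ) (x : ℝ) : ℝ :=
  x ^ (α - 1) * (1 - x) ^ (β - 1) / ∫ t in (0 : ℝ)..1, t ^ (α - 1) * (1 - t) ^ (β - 1)

/-- The differential entropy (in nats) of the `Beta(α, β)` distribution. -/
noncomputable def betaDifferentialEntropy (α β : ℝ) : ℝ :=
  -∫ x in (0 : ℝ)..1, betaDensity α β x * Real.log (betaDensity α β x)

/-!
The Beta density is at most `α + β - 1` when `α, β ≥ 1`: since `t ↦ t ^ a` increases and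
`t ↦ (1 - t) ^ b` decreases, the mass of `t ^ a * (1 - t) ^ b` to the left of `x` and the mass to
its right are both bounded below in terms of the value at `x`. Hence `-log (α + β - 1) ≤ H`.
In the other direction, among densities on the positive half-line with mean `m` the exponential one
has the largest entropy, `1 + log m`; the mean is `α / (α + β)`, so `H ≤ 1 + log α - log (α + β)`.
-/

open MeasureTheory Set

section Entropy

variable {X : Type*} [MeasurableSpace X] {μ : Measure X} {p q : X → ℝ}

lemma mul_log_add_sub_le_mul_log_self {x y : ℝ} (hx : 0 ≤ x) (hy : 0 < y) :
    x * Real.log y + (x - y) ≤ x * Real.log x := by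
  rcases hx.eq_or_lt with rfl | hx
  · simpa using hy.le
  · have hlog : Real.log y - Real.log x ≤ y / x - 1 := by
      rw [← Real.log_div hy.ne' hx.ne']
      exact Real.log_le_sub_one_of_pos (div_pos hy hx)
    have hmul : x * (Real.log y - Real.log x) ≤ x * (y / x - 1) := by gcongr
    have hcancel : x * (y / x - 1) = y - x := by field_simp
    linarith

lemma integral_mul_log_le_integral_mul_log_self (hp : 0 ≤ᵐ[μ] p) (hq : ∀ᵐ x ∂μ, 0 < q x)
    (hp_int : Integrable p μ) (hq_int : Integrable q μ)
    (hpq_int : Integrable (fun x ↦ p x * Real.log (q x)) μ)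
    (hpp_int : Integrable (fun x ↦ p x * Real.log (p x)) μ)
    (hmass : ∫ x, q x ∂μ ≤ ∫ x, p x ∂μ) :
    ∫ x, p x * Real.log (q x) ∂μ ≤ ∫ x, p x * Real.log (p x) ∂μ := by
  calc ∫ x, p x * Real.log (q x) ∂μ
      ≤ ∫ x, p x * Real.log (q x) ∂μ + (∫ x, p x ∂μ - ∫ x, q x ∂μ) := by linarith
    _ = ∫ x, (p x * Real.log (q x) + (p x - q x)) ∂μ := by
      rw [← integral_sub hp_int hq_int]
      exact (integral_add hpq_int (hp_int.sub hq_int)).symm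
    _ ≤ ∫ x, p x * Real.log (p x) ∂μ := by
      refine integral_mono_ae (hpq_int.add (hp_int.sub hq_int)) hpp_int ?_
      filter_upwards [hp, hq] with x hpx hqx
      exact mul_log_add_sub_le_mul_log_self hpx hqx

lemma integral_mul_log_self_le_of_le {M : ℝ} (hp : 0 ≤ᵐ[μ] p)
    (hpM : ∀ᵐ x ∂μ, p x ≤ M) (hp_int : Integrable p μ)
    (hpp_int : Integrable (fun x ↦ p x * Real.log (p x)) μ) :
    ∫ x, p x * Real.log (p x) ∂μ ≤ (∫ x, p x ∂μ) * Real.log M := by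
  rw [← integral_mul_const]
  refine integral_mono_ae hpp_int (hp_int.mul_const _) ?_
  filter_upwards [hp, hpM] with x hpx hpxM
  rcases hpx.eq_or_lt with hzero | hpos
  · simp [← hzero]
  · exact mul_le_mul_of_nonneg_left (Real.log_le_log hpos hpxM) hpos.le

lemma integrableOn_mul_exp_neg_mul_Ioi {r : ℝ} (hr : 0 < r) :
    IntegrableOn (fun x ↦ r * Real.exp (-r * x)) (Ioi 0) :=
  (exp_neg_integrableOn_Ioi 0 hr).const_mul r

lemma integral_mul_exp_neg_mul_Ioi {r : ℝ} (hr : 0 < r) :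
    ∫ x in Ioi 0, r * Real.exp (-r * x) = 1 := by
  rw [integral_const_mul, integral_exp_mul_Ioi (neg_neg_of_pos hr)]
  simp [hr.ne']

lemma neg_integral_mul_log_self_le_one_add_log_mean {s : Set ℝ} {p : ℝ → ℝ}
    (hs : MeasurableSet s) (hs_pos : s ⊆ Ioi 0) (hp : ∀ x ∈ s, 0 ≤ p x)
    (hpp_int : IntegrableOn (fun x ↦ p x * Real.log (p x)) s)
    (hmass : ∫ x in s, p x = 1) (hmean : 0 < ∫ x in s, x * p x) :
    -∫ x in s, p x * Real.log (p x) ≤ 1 + Real.log (∫ x in s, x * p x) := by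
  set m := ∫ x in s, x * p x with hm
  let q : ℝ → ℝ := fun x ↦ m⁻¹ * Real.exp (-m⁻¹ * x)
  have hq (x : ℝ) : 0 < q x := by positivity
  have hp_int : IntegrableOn p s := .of_integral_ne_zero (by simp [hmass])
  have hxp_int : IntegrableOn (fun x ↦ x * p x) s := .of_integral_ne_zero hmean.ne'
  have hq_int : IntegrableOn q (Ioi 0) := integrableOn_mul_exp_neg_mul_Ioi (inv_pos.2 hmean)
  have hq_mass : ∫ x in s, q x ≤ ∫ x in s, p x := by
    rw [hmass, ← integral_mul_exp_neg_mul_Ioi (inv_pos.2 hmean)]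
    exact setIntegral_mono_set hq_int (.of_forall fun x ↦ (hq x).le) hs_pos.eventuallyLE
  have hp_log_q : (fun x ↦ p x * Real.log (q x)) =
      fun x ↦ p x * -Real.log m - m⁻¹ * (x * p x) := by
    ext x
    rw [Real.log_mul (inv_ne_zero hmean.ne') (Real.exp_ne_zero _), Real.log_inv, Real.log_exp]
    ring
  have hcross : ∫ x in s, p x * Real.log (q x) = -Real.log m - 1 := by
    rw [hp_log_q, integral_sub (hp_int.mul_const _) (hxp_int.const_mul _), integral_mul_const,
      integral_const_mul, hmass, ← hm, inv_mul_cancel₀ hmean.ne', one_mul]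
  have hgibbs := integral_mul_log_le_integral_mul_log_self (ae_restrict_of_forall_mem hs hp)
    (.of_forall hq) hp_int (hq_int.mono_set hs_pos)
    (hp_log_q ▸ (hp_int.mul_const _).sub (hxp_int.const_mul _)) hpp_int hq_mass
  linarith

end Entropy

section BetaIntegral

variable {a b α β x : ℝ}

lemma intervalIntegrable_rpow_mul_one_sub_rpow (ha : -1 < a) (hb : 0 ≤ b) (u v : ℝ) :
    IntervalIntegrable (fun t : ℝ ↦ t ^ a * (1 - t) ^ b) volume u v :=
  (intervalIntegral.intervalIntegrable_rpow' ha).mul_continuousOn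
    ((continuous_const.sub continuous_id).rpow_const fun _ ↦ .inr hb).continuousOn

lemma rpow_add_one_div_mul_one_sub_rpow_le_integral (ha : -1 < a) (hb : 0 ≤ b)
    (hx : x ∈ Icc (0 : ℝ) 1) :
    x ^ (a + 1) / (a + 1) * (1 - x) ^ b ≤ ∫ t in (0 : ℝ)..x, t ^ a * (1 - t) ^ b := by
  have hpow : ∫ t in (0 : ℝ)..x, t ^ a = x ^ (a + 1) / (a + 1) := by
    rw [integral_rpow (.inl ha), Real.zero_rpow (by linarith), sub_zero]
  rw [← hpow, ← intervalIntegral.integral_mul_const]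
  refine intervalIntegral.integral_mono_on hx.1
    ((intervalIntegral.intervalIntegrable_rpow' ha).mul_const _)
    (intervalIntegrable_rpow_mul_one_sub_rpow ha hb 0 x) fun t ht ↦ ?_
  have ht0 : 0 ≤ t := ht.1
  have hx1 : 0 ≤ 1 - x := sub_nonneg.2 hx.2
  gcongr
  exact ht.2

lemma rpow_mul_one_sub_rpow_le_integral (ha : 0 ≤ a) (hb : 0 ≤ b) (hx : x ∈ Icc (0 : ℝ) 1) :
    x ^ a * (1 - x) ^ b ≤ (a + b + 1) * ∫ t in (0 : ℝ)..1, t ^ a * (1 - t) ^ b := by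
  have hx0 : 0 ≤ x := hx.1
  have hx1 : 0 ≤ 1 - x := sub_nonneg.2 hx.2
  have hleft : x ^ (a + 1) / (a + 1) * (1 - x) ^ b ≤ ∫ t in (0 : ℝ)..x, t ^ a * (1 - t) ^ b :=
    rpow_add_one_div_mul_one_sub_rpow_le_integral (by linarith) hb hx
  have hright : (1 - x) ^ (b + 1) / (b + 1) * x ^ a ≤ ∫ t in x..1, t ^ a * (1 - t) ^ b := by
    have hreflect := intervalIntegral.integral_comp_sub_left
      (fun t : ℝ ↦ t ^ b * (1 - t) ^ a) (1 : ℝ) (a := x) (b := 1)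
    simp only [sub_sub_cancel, sub_self, mul_comm _ (_ ^ a)] at hreflect
    rw [hreflect]
    simpa [mul_comm] using rpow_add_one_div_mul_one_sub_rpow_le_integral (x := 1 - x)
      (by linarith : -1 < b) ha ⟨hx1, by linarith⟩
  have hint := intervalIntegrable_rpow_mul_one_sub_rpow (by linarith : -1 < a) hb
  rw [← intervalIntegral.integral_add_adjacent_intervals (hint 0 x) (hint x 1),
    ← div_le_iff₀' (by linarith)]
  calc x ^ a * (1 - x) ^ b / (a + b + 1)
      = x * (x ^ a * (1 - x) ^ b) / (a + b + 1) +
        (1 - x) * (x ^ a * (1 - x) ^ b) / (a + b + 1) := by ring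
    _ ≤ x * (x ^ a * (1 - x) ^ b) / (a + 1) + (1 - x) * (x ^ a * (1 - x) ^ b) / (b + 1) := by
      gcongr <;> linarith
    _ = x ^ (a + 1) / (a + 1) * (1 - x) ^ b + (1 - x) ^ (b + 1) / (b + 1) * x ^ a := by
      rw [Real.rpow_add_one' hx0 (by linarith), Real.rpow_add_one' hx1 (by linarith)]
      ring
    _ ≤ _ := add_le_add hleft hright

lemma integral_rpow_mul_one_sub_rpow_eq_beta (hα : 0 < α) (hβ : 0 < β) :
    ∫ t in (0 : ℝ)..1, t ^ (α - 1) * (1 - t) ^ (β - 1) = ProbabilityTheory.beta α β := by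
  have hcomplex : Complex.betaIntegral α β =
      ((∫ t in (0 : ℝ)..1, t ^ (α - 1) * (1 - t) ^ (β - 1) : ℝ) : ℂ) := by
    rw [Complex.betaIntegral, ← intervalIntegral.integral_ofReal]
    refine intervalIntegral.integral_congr fun t ht ↦ ?_
    rw [uIcc_of_le zero_le_one] at ht
    push_cast [Complex.ofReal_cpow ht.1, Complex.ofReal_cpow (sub_nonneg.2 ht.2)]
    rfl
  rw [ProbabilityTheory.beta_eq_betaIntegralReal α β hα hβ, hcomplex, Complex.ofReal_re]

lemma beta_add_one_left (hα : 0 < α) (hβ : 0 < β) :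
    ProbabilityTheory.beta (α + 1) β = α / (α + β) * ProbabilityTheory.beta α β := by
  have hΓ : Real.Gamma (α + β) ≠ 0 := (Real.Gamma_pos_of_pos (add_pos hα hβ)).ne'
  rw [ProbabilityTheory.beta, ProbabilityTheory.beta, add_right_comm,
    Real.Gamma_add_one hα.ne', Real.Gamma_add_one (add_pos hα hβ).ne']
  field_simp

end BetaIntegral

section BetaDensity

variable {α β x : ℝ}

lemma betaDensity_eq_div_beta (hα : 0 < α) (hβ : 0 < β) (x : ℝ) :
    betaDensity α β x = x ^ (α - 1) * (1 - x) ^ (β - 1) / ProbabilityTheory.beta α β := by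
  rw [betaDensity, integral_rpow_mul_one_sub_rpow_eq_beta hα hβ]

lemma betaDensity_nonneg (hα : 0 < α) (hβ : 0 < β) (hx : x ∈ Icc (0 : ℝ) 1) :
    0 ≤ betaDensity α β x := by
  rw [betaDensity_eq_div_beta hα hβ]
  have := ProbabilityTheory.beta_pos hα hβ
  have := hx.1
  have := sub_nonneg.2 hx.2
  positivity

lemma betaDensity_le_add_sub_one (hα : 1 ≤ α) (hβ : 1 ≤ β) (hx : x ∈ Icc (0 : ℝ) 1) :
    betaDensity α β x ≤ α + β - 1 := by
  have hα0 : 0 < α := by linarith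
  have hβ0 : 0 < β := by linarith
  have hbound := rpow_mul_one_sub_rpow_le_integral (sub_nonneg.2 hα) (sub_nonneg.2 hβ) hx
  rw [integral_rpow_mul_one_sub_rpow_eq_beta hα0 hβ0] at hbound
  rw [betaDensity_eq_div_beta hα0 hβ0, div_le_iff₀ (ProbabilityTheory.beta_pos hα0 hβ0)]
  linarith

lemma continuous_betaDensity (hα : 1 ≤ α) (hβ : 1 ≤ β) : Continuous (betaDensity α β) := by
  unfold betaDensity
  exact ((continuous_id.rpow_const fun _ ↦ .inr (sub_nonneg.2 hα)).mul
    ((continuous_const.sub continuous_id).rpow_const fun _ ↦ .inr (sub_nonneg.2 hβ))).div_const _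

lemma integrableOn_betaDensity_mul_log (hα : 1 ≤ α) (hβ : 1 ≤ β) :
    IntegrableOn (fun x ↦ betaDensity α β x * Real.log (betaDensity α β x)) (Ioc 0 1) :=
  (Real.continuous_mul_log.comp (continuous_betaDensity hα hβ)).integrableOn_Ioc

lemma integral_betaDensity (hα : 0 < α) (hβ : 0 < β) :
    ∫ x in Ioc 0 1, betaDensity α β x = 1 := by
  rw [← intervalIntegral.integral_of_le zero_le_one]
  simp only [betaDensity_eq_div_beta hα hβ]
  rw [intervalIntegral.integral_div, integral_rpow_mul_one_sub_rpow_eq_beta hα hβ,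
    div_self (ProbabilityTheory.beta_pos hα hβ).ne']

lemma integral_mul_betaDensity (hα : 0 < α) (hβ : 0 < β) :
    ∫ x in Ioc 0 1, x * betaDensity α β x = α / (α + β) := by
  have hshift : ∀ x ∈ Ioc (0 : ℝ) 1, x * betaDensity α β x =
      x ^ (α + 1 - 1) * (1 - x) ^ (β - 1) / ProbabilityTheory.beta α β := by
    intro x hx
    rw [betaDensity_eq_div_beta hα hβ, add_sub_right_comm, Real.rpow_add_one hx.1.ne']
    ring
  rw [setIntegral_congr_fun measurableSet_Ioc hshift,
    ← intervalIntegral.integral_of_le zero_le_one, intervalIntegral.integral_div,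
    integral_rpow_mul_one_sub_rpow_eq_beta (by linarith) hβ, beta_add_one_left hα hβ,
    mul_div_cancel_right₀ _ (ProbabilityTheory.beta_pos hα hβ).ne']

lemma neg_log_add_sub_one_le_betaDifferentialEntropy (hα : 1 ≤ α) (hβ : 1 ≤ β) :
    -Real.log (α + β - 1) ≤ betaDifferentialEntropy α β := by
  have hα0 : 0 < α := by linarith
  have hβ0 : 0 < β := by linarith
  have hbound := integral_mul_log_self_le_of_le
    (ae_restrict_of_forall_mem measurableSet_Ioc fun x hx ↦
      betaDensity_nonneg hα0 hβ0 (Ioc_subset_Icc_self hx))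
    (ae_restrict_of_forall_mem measurableSet_Ioc fun x hx ↦
      betaDensity_le_add_sub_one hα hβ (Ioc_subset_Icc_self hx))
    (continuous_betaDensity hα hβ).integrableOn_Ioc (integrableOn_betaDensity_mul_log hα hβ)
  rw [integral_betaDensity hα0 hβ0, one_mul] at hbound
  rw [betaDifferentialEntropy, intervalIntegral.integral_of_le zero_le_one]
  exact neg_le_neg hbound

lemma betaDifferentialEntropy_le_one_add_log (hα : 1 ≤ α) (hβ : 1 ≤ β) :
    betaDifferentialEntropy α β ≤ 1 + Real.log (α / (α + β)) := by
  have hα0 : 0 < α := by linarith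
  have hβ0 : 0 < β := by linarith
  have hmean := integral_mul_betaDensity hα0 hβ0
  rw [betaDifferentialEntropy, intervalIntegral.integral_of_le zero_le_one, ← hmean]
  exact neg_integral_mul_log_self_le_one_add_log_mean measurableSet_Ioc Ioc_subset_Ioi_self
    (fun x hx ↦ betaDensity_nonneg hα0 hβ0 (Ioc_subset_Icc_self hx))
    (integrableOn_betaDensity_mul_log hα hβ) (integral_betaDensity hα0 hβ0)
    (hmean ▸ by positivity)

end BetaDensity

theorem betaDifferentialEntropy_approx_general :
    ∃ C > (0 : ℝ), ∀ α β : ℝ, 2 ≤ α → 1 ≤ β →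
      |betaDifferentialEntropy α β + Real.log (α + β)| ≤ C * Real.log α := by
  refine ⟨3, by norm_num, fun α β hα hβ ↦ ?_⟩
  have hα1 : 1 ≤ α := by linarith
  have hlower := neg_log_add_sub_one_le_betaDifferentialEntropy hα1 hβ
  have hupper := betaDifferentialEntropy_le_one_add_log hα1 hβ
  rw [Real.log_div (by linarith) (by linarith)] at hupper
  have hlog_sum : Real.log (α + β - 1) ≤ Real.log (α + β) :=
    Real.log_le_log (by linarith) (by linarith)
  have hlog_two : Real.log 2 ≤ Real.log α := Real.log_le_log two_pos hα
  have hone : 1 ≤ 2 * Real.log 2 := by linarith [Real.log_two_gt_d9]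
  rw [abs_le]
  constructor <;> linarith

theorem betaDifferentialEntropy_approx :
    ∃ C > (0 : ℝ), ∀ k n : ℕ, 2 ≤ k → k < n →
      |betaDifferentialEntropy (k : ℝ) ((n : ℝ) - (k : ℝ) + 1) + Real.log ((n : ℝ) + 1)| ≤
        C * Real.log k := by
  obtain ⟨C, hC, hbound⟩ := betaDifferentialEntropy_approx_general
  refine ⟨C, hC, fun k n hk hkn ↦ ?_⟩
  have hβ : (1 : ℝ) ≤ n - k + 1 := le_add_of_nonneg_left (sub_nonneg.2 (mod_cast hkn.le))
  simpa only [← add_assoc, add_sub_cancel] using hbound k (n - k + 1) (mod_cast hk) hβ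
end

section
/- Let U_1, ..., U_n be independent random variables uniformly distributed on [0, 1], with order statistics U_(1) ≤ U_(2) ≤ ... ≤ U_(n), and let c be a real number with 0 < c ≤ n. Then the probability that U_(1) ≥ 2c/n or that U_(i) − U_(i−1) ≥ 2c/n for some 2 ≤ i ≤ n is at most ⌈n/c⌉ · (1 − c/n)^n. -/
open MeasureTheory ProbabilityTheory

/-- The `i`-th order statistic (1-indexed) of a finite family of reals: the `i`-th entry of the
list of values sorted in increasing order (with junk value `0` out of range). -/
noncomputable def orderStat {n : ℕ} (u : Fin n → ℝ) (i : ℕ) : ℝ :=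
  ((List.ofFn u).mergeSort (fun a b => a ≤ b)).getD (i - 1) 0

/-!
Write `d = c / n` and cut `[0, 1]` into the `⌊1 / d⌋` cells `(k d, (k + 1) d)`. If all points lie in
`[0, 1]`, a gap of length at least `2 d` is an empty interval which contains one of these cells
entirely. A fixed cell is missed by all `n` points with probability `(1 - d) ^ n`, so the union
bound over the cells gives `⌊n / c⌋ (1 - c / n) ^ n`.
-/

section OrderStat

variable {n : ℕ} (u : Fin n → ℝ)

theorem orderStat_le_orderStat {i j : ℕ} (hij : i ≤ j) (hjn : j ≤ n) :
    orderStat u i ≤ orderStat u j := by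
  rcases Nat.eq_zero_or_pos n with rfl | hn
  · simp [orderStat]
  · have length_sorted : ((List.ofFn u).mergeSort (fun a b => a ≤ b)).length = n := by simp
    unfold orderStat
    rw [List.getD_eq_getElem _ _ (by lia), List.getD_eq_getElem _ _ (by lia)]
    exact List.sortedLE_mergeSort.getElem_le_getElem_of_le (by lia)

theorem image_orderStat_Icc : orderStat u '' Set.Icc 1 n = Set.range u := by
  set l := (List.ofFn u).mergeSort (fun a b => a ≤ b) with hl
  have length_l : l.length = n := by simp [hl]
  have mem_l (x : ℝ) : x ∈ l ↔ x ∈ Set.range u := by simp [hl, List.mem_ofFn]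
  ext x
  rw [← mem_l, List.mem_iff_getElem]
  constructor
  · rintro ⟨i, ⟨hi₁, hin⟩, rfl⟩
    exact ⟨i - 1, by lia, (List.getD_eq_getElem _ _ _).symm⟩
  · rintro ⟨i, hi, rfl⟩
    exact ⟨i + 1, ⟨by lia, by lia⟩, List.getD_eq_getElem _ _ hi⟩

theorem orderStat_mem_range {i : ℕ} (hi : 1 ≤ i) (hin : i ≤ n) : orderStat u i ∈ Set.range u :=
  image_orderStat_Icc u ▸ Set.mem_image_of_mem _ ⟨hi, hin⟩

theorem exists_orderStat_eq (k : Fin n) : ∃ i, 1 ≤ i ∧ i ≤ n ∧ orderStat u i = u k := by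
  simpa [and_assoc] using (image_orderStat_Icc u).ge (Set.mem_range_self k)

theorem orderStat_one_le (k : Fin n) : orderStat u 1 ≤ u k := by
  obtain ⟨i, hi, hin, hik⟩ := exists_orderStat_eq u k
  exact hik ▸ orderStat_le_orderStat u hi hin

theorem le_orderStat_pred_or_orderStat_le {i : ℕ} (hin : i ≤ n) (k : Fin n) :
    u k ≤ orderStat u (i - 1) ∨ orderStat u i ≤ u k := by
  obtain ⟨j, -, hjn, hjk⟩ := exists_orderStat_eq u k
  rw [← hjk]
  rcases lt_or_ge j i with hji | hij
  · exact .inl (orderStat_le_orderStat u (by lia) (by lia))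
  · exact .inr (orderStat_le_orderStat u hij hjn)

end OrderStat

section Gap

/-- The family `u` has a gap of length `ℓ`: some open interval of length `ℓ` inside `[0, 1]`
contains no `u i`. This weakens the condition on successive order statistics, since the
endpoints need not be values of `u` and the stretch after the largest value counts as well. -/
def HasGap {ι : Type*} (u : ι → ℝ) (ℓ : ℝ) : Prop :=
  ∃ a, 0 ≤ a ∧ a + ℓ ≤ 1 ∧ ∀ i, u i ∉ Set.Ioo a (a + ℓ)

theorem hasGap_of_le_orderStat {n : ℕ} (hn : n ≠ 0) {u : Fin n → ℝ}
    (hu : ∀ i, u i ∈ Set.Icc 0 1) {ℓ : ℝ}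
    (h : ℓ ≤ orderStat u 1 ∨
      ∃ i ∈ Finset.Icc 2 n, ℓ ≤ orderStat u i - orderStat u (i - 1)) :
    HasGap u ℓ := by
  have orderStat_mem {i : ℕ} (hi : 1 ≤ i) (hin : i ≤ n) : orderStat u i ∈ Set.Icc 0 1 :=
    Set.range_subset_iff.2 hu (orderStat_mem_range u hi hin)
  rcases h with first_gap | ⟨i, hi, gap⟩
  · refine ⟨0, le_rfl, ?_, fun k hk => ?_⟩
    · linarith [(orderStat_mem le_rfl (Nat.one_le_iff_ne_zero.2 hn)).2]
    · linarith [orderStat_one_le u k, hk.2]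
  · obtain ⟨hi₂, hin⟩ := Finset.mem_Icc.1 hi
    refine ⟨orderStat u (i - 1), (orderStat_mem (by lia) (by lia)).1, ?_, fun k hk => ?_⟩
    · linarith [(orderStat_mem (by lia) hin).2]
    · rcases le_orderStat_pred_or_orderStat_le u hin k with below | above
      · exact hk.1.not_ge below
      · linarith [hk.2]

theorem exists_natCast_mul_mem_Ico {K : Type*} [Field K] [LinearOrder K] [IsStrictOrderedRing K]
    [FloorSemiring K] {a d : K} (ha : 0 ≤ a) (hd : 0 < d) : ∃ k : ℕ, k * d ∈ Set.Ico a (a + d) := by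
  refine ⟨⌈a / d⌉₊, (div_le_iff₀ hd).1 (Nat.le_ceil _), ?_⟩
  rw [← lt_div_iff₀ hd, add_div, div_self hd.ne']
  exact Nat.ceil_lt_add_one (div_nonneg ha hd.le)

theorem lt_floor_inv_iff {K : Type*} [Field K] [LinearOrder K] [IsStrictOrderedRing K]
    [FloorSemiring K] {d : K} (hd : 0 < d) {k : ℕ} : k < ⌊d⁻¹⌋₊ ↔ (k + 1) * d ≤ 1 := by
  rw [← Nat.succ_le_iff, Nat.le_floor_iff (inv_nonneg.2 hd.le), ← one_div, le_div_iff₀ hd,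
    Nat.cast_succ]

theorem HasGap.exists_cell_empty {ι : Type*} {u : ι → ℝ} {d : ℝ} (h : HasGap u (2 * d))
    (hd : 0 < d) : ∃ k < ⌊d⁻¹⌋₊, ∀ i, u i ∉ Set.Ioo (k * d) ((k + 1) * d) := by
  obtain ⟨a, ha, ha_add, hu⟩ := h
  obtain ⟨k, hak, hka⟩ := exists_natCast_mul_mem_Ico ha hd
  have cell_subset : Set.Ioo (k * d) ((k + 1) * d) ⊆ Set.Ioo a (a + 2 * d) :=
    Set.Ioo_subset_Ioo hak (by linarith)
  exact ⟨k, (lt_floor_inv_iff hd).2 (by linarith), fun i hi => hu i (cell_subset hi)⟩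

end Gap

section Probability

theorem measureReal_restrict_Icc_compl_Ioo {a b x y : ℝ} (hax : a ≤ x) (hxy : x ≤ y)
    (hyb : y ≤ b) :
    (volume.restrict (Set.Icc a b)).real (Set.Ioo x y)ᶜ = (b - a) - (y - x) := by
  have Ioo_subset : Set.Ioo x y ⊆ Set.Icc a b :=
    (Set.Ioo_subset_Ioo hax hyb).trans Set.Ioo_subset_Icc_self
  rw [measureReal_compl measurableSet_Ioo, measureReal_restrict_apply .univ, Set.univ_inter,
    measureReal_restrict_apply measurableSet_Ioo, Set.inter_eq_left.2 Ioo_subset,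
    Real.volume_real_Icc_of_le (by linarith), Real.volume_real_Ioo_of_le hxy]

variable {Ω ι : Type*} [MeasurableSpace Ω] [Fintype ι] {μ : Measure Ω}

theorem measureReal_forall_mem_eq_prod {α : ι → Type*} [∀ i, MeasurableSpace (α i)]
    {X : ∀ i, Ω → α i} {ν : ∀ i, Measure (α i)} (hindep : iIndepFun X μ)
    (hlaw : ∀ i, HasLaw (X i) (ν i) μ) {s : ∀ i, Set (α i)} (hs : ∀ i, MeasurableSet (s i)) :
    μ.real {ω | ∀ i, X i ω ∈ s i} = ∏ i, (ν i).real (s i) := by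
  have := hindep.isProbabilityMeasure
  have (i : ι) : IsProbabilityMeasure (ν i) := (hlaw i).isProbabilityMeasure_iff.1 this
  calc
    μ.real {ω | ∀ i, X i ω ∈ s i} = μ.real {ω | (X · ω) ∈ Set.univ.pi s} := by
      simp only [Set.mem_univ_pi]
    _ = (Measure.pi ν).real (Set.univ.pi s) :=
      (hindep.hasLaw_pi hlaw).measureReal_eq (MeasurableSet.univ_pi hs)
    _ = ∏ i, (ν i).real (s i) := by simp [measureReal_def, Measure.pi_pi]

theorem measureReal_forall_notMem_Ioo {U : ι → Ω → ℝ} (hindep : iIndepFun U μ)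
    (hlaw : ∀ i, HasLaw (U i) (volume.restrict (Set.Icc 0 1)) μ)
    {x y : ℝ} (hx : 0 ≤ x) (hxy : x ≤ y) (hy : y ≤ 1) :
    μ.real {ω | ∀ i, U i ω ∉ Set.Ioo x y} = (1 - (y - x)) ^ Fintype.card ι := by
  have prod_eq := measureReal_forall_mem_eq_prod hindep hlaw
    (s := fun _ => (Set.Ioo x y)ᶜ) fun _ => measurableSet_Ioo.compl
  simpa [measureReal_restrict_Icc_compl_Ioo hx hxy hy] using prod_eq

theorem measureReal_hasGap_le {U : ι → Ω → ℝ} (hindep : iIndepFun U μ)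
    (hlaw : ∀ i, HasLaw (U i) (volume.restrict (Set.Icc 0 1)) μ) {d : ℝ} (hd : 0 < d) :
    μ.real {ω | HasGap (fun i => U i ω) (2 * d)} ≤ ⌊d⁻¹⌋₊ * (1 - d) ^ Fintype.card ι := by
  have := hindep.isProbabilityMeasure
  let cells := Finset.range ⌊d⁻¹⌋₊
  let cellEmpty (k : ℕ) : Set Ω := {ω | ∀ i, U i ω ∉ Set.Ioo (k * d) ((k + 1) * d)}
  have measureReal_cellEmpty {k : ℕ} (hk : k ∈ cells) :
      μ.real (cellEmpty k) = (1 - d) ^ Fintype.card ι := by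
    have cell_le_one : (k + 1) * d ≤ 1 := (lt_floor_inv_iff hd).1 (Finset.mem_range.1 hk)
    rw [measureReal_forall_notMem_Ioo hindep hlaw (by positivity) (by linarith) cell_le_one]
    ring
  have subset_iUnion : {ω | HasGap (fun i => U i ω) (2 * d)} ⊆ ⋃ k ∈ cells, cellEmpty k :=
    fun ω hω => by simpa [cells, cellEmpty] using hω.exists_cell_empty hd
  calc
    _ ≤ μ.real (⋃ k ∈ cells, cellEmpty k) := measureReal_mono subset_iUnion (measure_ne_top μ _)
    _ ≤ ∑ k ∈ cells, μ.real (cellEmpty k) := measureReal_biUnion_finset_le _ _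
    _ = ⌊d⁻¹⌋₊ * (1 - d) ^ Fintype.card ι := by
      rw [Finset.sum_congr rfl fun _ => measureReal_cellEmpty, Finset.sum_const,
        Finset.card_range, nsmul_eq_mul]

end Probability

theorem prob_large_gap_le_general {Ω : Type*} [MeasurableSpace Ω] {μ : Measure Ω} {n : ℕ}
    (hn : n ≠ 0) {U : Fin n → Ω → ℝ} (hindep : iIndepFun U μ)
    (hlaw : ∀ i, HasLaw (U i) (volume.restrict (Set.Icc 0 1)) μ) {d : ℝ} (hd : 0 < d) :
    μ.real {ω | 2 * d ≤ orderStat (fun i => U i ω) 1 ∨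
        ∃ i ∈ Finset.Icc 2 n,
          2 * d ≤ orderStat (fun i => U i ω) i - orderStat (fun i => U i ω) (i - 1)} ≤
      ⌊d⁻¹⌋₊ * (1 - d) ^ n := by
  have := hindep.isProbabilityMeasure
  have ae_mem_Icc : ∀ᵐ ω ∂μ, ∀ i, U i ω ∈ Set.Icc 0 1 :=
    ae_all_iff.2 fun i => ((hlaw i).ae_iff (p := (· ∈ Set.Icc 0 1)) (by measurability)).2
      (ae_restrict_mem measurableSet_Icc)
  calc
    _ ≤ μ.real {ω | HasGap (fun i => U i ω) (2 * d)} := by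
      refine ENNReal.toReal_mono (measure_ne_top μ _) (measure_mono_ae ?_)
      filter_upwards [ae_mem_Icc] with ω hω using hasGap_of_le_orderStat hn hω
    _ ≤ ⌊d⁻¹⌋₊ * (1 - d) ^ n := by
      simpa only [Fintype.card_fin] using measureReal_hasGap_le hindep hlaw hd

/-- For `n` i.i.d. uniform random variables on `[0, 1]` with order statistics
`U_(1) ≤ ... ≤ U_(n)`, and `0 < c ≤ n`, the probability that `U_(1) ≥ 2c/n` or that some
successive gap `U_(i) - U_(i-1)` is at least `2c/n` is at most `⌈n/c⌉ * (1 - c/n)^n`. -/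
theorem prob_large_gap_le {Ω : Type*} [MeasurableSpace Ω] (μ : Measure Ω)
    [IsProbabilityMeasure μ] (n : ℕ) (U : Fin n → Ω → ℝ)
    (hmeas : ∀ i, Measurable (U i))
    (hindep : iIndepFun U μ)
    (hunif : ∀ i, μ.map (U i) = volume.restrict (Set.Icc (0 : ℝ) 1))
    (c : ℝ) (hc : 0 < c) (hcn : c ≤ n) :
    (μ {ω | 2 * c / n ≤ orderStat (fun i => U i ω) 1 ∨
        ∃ i ∈ Finset.Icc 2 n,
          2 * c / n ≤ orderStat (fun i => U i ω) i - orderStat (fun i => U i ω) (i - 1)}).toReal ≤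
      (⌈(n : ℝ) / c⌉₊ : ℝ) * (1 - c / n) ^ n := by
  have hn : (0 : ℝ) < n := hc.trans_le hcn
  have floor_bound := prob_large_gap_le_general (mod_cast hn.ne') hindep
    (fun i => ⟨(hmeas i).aemeasurable, hunif i⟩) (div_pos hc hn)
  rw [inv_div, ← mul_div_assoc] at floor_bound
  have one_sub_nonneg : 0 ≤ 1 - c / n := sub_nonneg.2 ((div_le_one hn).2 hcn)
  exact floor_bound.trans (by gcongr; exact Nat.floor_le_ceil _)
end
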